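/- Let (E,‖·‖) be an n-dimensional real normed space with n ≥ 3, let μ_F be the Haar (Lebesgue) measure on E normalized so that μ_F of the unit ball equals ω_n, and let x₀ ∈ E. Then the constant K_a is optimal in the Caffarelli-Kohn-Nirenberg inequality on (E,‖·‖,μ_F): for every C < K_a there exists a nonzero compactly supported Lipschitz function u : E → ℝ such that (∫_E |u(x)|^p/‖x-x₀‖^{ap} dμ_F(x))^{1/p} > C·(∫_E |Du|(x)² dμ_F(x))^{1/2}, where |Du|(x) = limsup_{y→x} |u(y)-u(x)|/‖y-x‖ is the local Lipschitz constant. -/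

import Mathlib

/-!
Sharpness is seen on the radial extremals `U(x) = (1 + r ^ q) ^ (-m)`, with `r = ‖x - x₀‖`,
`q = 2 - a p` and `m = (n - 2) / q`, so that `p = 2 (m + 1) / m`. For a radial function only the
distance to `x₀` enters, so the norm need not be Euclidean: the local Lipschitz constant is at most
the slope of the profile (`abs_locLip_radial_le`), and integration reduces to the half-line with the
factor `n ω_n r ^ (n - 1)` (`lintegral_radial`). Both one-dimensional integrals are Beta integrals
after the substitution `r ^ q / (1 + r ^ q)` (`lintegral_beta_Ioi`), and the quotient of the two
norms of `U` is exactly `K_a` (`CKNconst_mul_eq`).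

Since `U` is neither compactly supported nor, for `q < 1`, Lipschitz at `x₀`, it is replaced by its
truncations: the profile is frozen outside `[R⁻¹, R]` and shifted down to vanish beyond `R`. Their
Dirichlet energies never exceed that of `U` (`lintegral_locLip_le`), while by Fatou's lemma their
weighted `L^p` integrals are in the limit at least that of `U` (`lintegral_profile_le_liminf`).
Hence if all truncations satisfied the inequality with a constant `C < K_a`, so would `U`, which
contradicts the explicit value of its quotient.
-/

open MeasureTheory Filter Topology Metric

/-- Volume of the unit ball in `ℝ^n`. -/
noncomputable def omegaBall (n : ℕ) : ℝ :=
  Real.pi ^ ((n : ℝ) / 2) / Real.Gamma ((n : ℝ) / 2 + 1)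

/-- The sharp Caffarelli-Kohn-Nirenberg constant `K_a` (for `p = 2n/(n-2+2a)`). -/
noncomputable def CKNconst (n : ℕ) (a p : ℝ) : ℝ :=
  (1 / (((n : ℝ) - 2) * ((n : ℝ) - a * p))) ^ ((1 : ℝ) / 2) *
    ((2 - a * p) * Real.Gamma ((2 * (n : ℝ) - 2 * a * p) / (2 - a * p)) /
        ((n : ℝ) * omegaBall n * Real.Gamma (((n : ℝ) - a * p) / (2 - a * p)) ^ 2)) ^
      ((2 - a * p) / (2 * (n : ℝ) - 2 * a * p))

/-- The local Lipschitz constant `|Du|(x) = limsup_{y → x} |u(y)-u(x)| / d(x,y)`. -/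
noncomputable def locLip {X : Type*} [MetricSpace X] (u : X → ℝ) (x : X) : ℝ :=
  Filter.limsup (fun y => |u y - u x| / dist x y) (𝓝[≠] x)

namespace CKNSharp

open Set
open scoped ENNReal NNReal

/-! ### Radial integration and an improper Beta integral -/

/-- Integration in polar coordinates for the distance to `x₀`, for `ℝ≥0∞`-valued integrands. -/
lemma lintegral_radial {E : Type*} [NormedAddCommGroup E] [NormedSpace ℝ E]
    [MeasurableSpace E] [BorelSpace E] [FiniteDimensional ℝ E] [Nontrivial E]
    (μ : Measure E) [μ.IsAddHaarMeasure] (x₀ : E) {f : ℝ → ℝ≥0∞} (hf : Measurable f) :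
    ∫⁻ x, f ‖x - x₀‖ ∂μ = (Module.finrank ℝ E * μ (ball 0 1)) *
      ∫⁻ y in Ioi (0 : ℝ), ENNReal.ofReal (y ^ (Module.finrank ℝ E - 1)) * f y := by
  rw [lintegral_sub_right_eq_self (μ := μ) (fun x => f ‖x‖) x₀]
  calc
    ∫⁻ x, f (‖x‖) ∂μ = ∫⁻ x : ({(0)}ᶜ : Set E), f (‖x.1‖) ∂(μ.comap (↑)) := by
      rw [lintegral_subtype_comap (measurableSet_singleton _).compl fun x ↦ f (‖x‖),
        restrict_compl_singleton]
    _ = ∫⁻ x, f x.2 ∂μ.toSphere.prod (.volumeIoiPow (Module.finrank ℝ E - 1)) := by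
      simpa using (μ.measurePreserving_homeomorphUnitSphereProd.lintegral_comp_emb
        (Homeomorph.measurableEmbedding _) (f ∘ Subtype.val ∘ Prod.snd))
    _ = μ.toSphere univ * ∫⁻ x : Ioi (0 : ℝ), f x ∂.volumeIoiPow (Module.finrank ℝ E - 1) := by
      rw [lintegral_prod _ (by fun_prop)]
      simp only [lintegral_const]
      rw [mul_comm]
    _ = _ := by
      rw [μ.toSphere_apply_univ, Measure.volumeIoiPow,
        lintegral_withDensity_eq_lintegral_mul _ (by fun_prop) (by fun_prop),
        ← lintegral_subtype_comap measurableSet_Ioi]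
      rfl

/-- The Beta integral in the variable `r` with `x = r ^ q / (1 + r ^ q)`. -/
lemma lintegral_beta_Ioi {q α β : ℝ} (hq : 0 < q) (hα : 0 < α) (hβ : 0 < β) :
    ∫⁻ r in Ioi (0 : ℝ), ENNReal.ofReal (r ^ (q * α - 1) * (1 + r ^ q) ^ (-(α + β))) =
      ENNReal.ofReal (ProbabilityTheory.beta α β / q) := by
  have hB := ProbabilityTheory.beta_pos hα hβ
  set h : ℝ → ℝ := fun r => 1 - (1 + r ^ q)⁻¹ with hh
  have hpos : ∀ r ∈ Ioi (0 : ℝ), 0 < r ^ q := fun r hr => Real.rpow_pos_of_pos hr q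
  have hder : ∀ r ∈ Ioi (0 : ℝ),
      HasDerivWithinAt h (q * r ^ (q - 1) / (1 + r ^ q) ^ 2) (Ioi 0) r := by
    intro r hr
    have h1 : HasDerivAt (fun r : ℝ => 1 + r ^ q) (q * r ^ (q - 1)) r :=
      (Real.hasDerivAt_rpow_const (Or.inl hr.out.ne')).const_add 1
    have h2 := (h1.inv (by have := hpos r hr; positivity)).const_sub 1
    convert! h2.hasDerivWithinAt using 1
    ring
  have hinj : InjOn h (Ioi 0) := by
    intro r hr t ht hrt
    have h1 : r ^ q = t ^ q := by
      simp only [hh, sub_right_inj, inv_inj, add_right_inj] at hrt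
      exact hrt
    exact (Real.rpow_left_inj hr.out.le ht.out.le hq.ne').1 h1
  have himg : h '' Ioi 0 = Ioo 0 1 := by
    ext x
    constructor
    · rintro ⟨r, hr, rfl⟩
      have := hpos r hr
      refine ⟨?_, ?_⟩
      · have : (1 + r ^ q)⁻¹ < 1 := inv_lt_one_of_one_lt₀ (by linarith)
        simp only [hh]; linarith
      · have : 0 < (1 + r ^ q)⁻¹ := by positivity
        simp only [hh]; linarith
    · rintro ⟨h0, h1⟩
      have hx : 0 < x / (1 - x) := div_pos h0 (by linarith)
      refine ⟨(x / (1 - x)) ^ q⁻¹, Real.rpow_pos_of_pos hx _, ?_⟩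
      simp only [hh]
      rw [← Real.rpow_mul hx.le, inv_mul_cancel₀ hq.ne', Real.rpow_one]
      have : 1 - x ≠ 0 := by linarith
      field_simp
      ring
  have key := ProbabilityTheory.lintegral_betaPDF_eq_one hα hβ
  rw [ProbabilityTheory.lintegral_betaPDF, ← himg,
    lintegral_image_eq_lintegral_abs_deriv_mul measurableSet_Ioi hder hinj] at key
  have key2 : ∫⁻ r in Ioi (0 : ℝ), ENNReal.ofReal (q / ProbabilityTheory.beta α β) *
      ENNReal.ofReal (r ^ (q * α - 1) * (1 + r ^ q) ^ (-(α + β))) = 1 := by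
    rw [← key]
    refine setLIntegral_congr_fun measurableSet_Ioi fun r hr => ?_
    have hr0 : 0 < r := hr
    have hrq := hpos r hr
    have h1 : 0 < 1 + r ^ q := by positivity
    rw [← ENNReal.ofReal_mul (by positivity), ← ENNReal.ofReal_mul (by positivity),
      abs_of_pos (by positivity)]
    congr 1
    have e1 : h r = r ^ q * (1 + r ^ q)⁻¹ := by simp only [hh]; field_simp; ring
    have e2 : 1 - h r = (1 + r ^ q)⁻¹ := by simp only [hh]; ring
    rw [e2, e1, Real.mul_rpow hrq.le (by positivity), Real.inv_rpow h1.le, Real.inv_rpow h1.le,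
      ← Real.rpow_neg h1.le, ← Real.rpow_neg h1.le, ← Real.rpow_mul hr0.le]
    have e3 : r ^ (q * α - 1) = r ^ (q - 1) * r ^ (q * (α - 1)) := by
      rw [← Real.rpow_add hr0]; congr 1; ring
    have e4 : (1 + r ^ q) ^ (-(α + β)) =
        (1 + r ^ q) ^ (-(α - 1)) * (1 + r ^ q) ^ (-(β - 1)) / (1 + r ^ q) ^ 2 := by
      rw [eq_div_iff (by positivity), ← Real.rpow_natCast, ← Real.rpow_add h1, ← Real.rpow_add h1]
      congr 1; push_cast; ring
    rw [e3, e4]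
    field_simp
  rw [lintegral_const_mul' _ _ ENNReal.ofReal_ne_top] at key2
  have hc : ENNReal.ofReal (ProbabilityTheory.beta α β / q) *
      ENNReal.ofReal (q / ProbabilityTheory.beta α β) = 1 := by
    rw [← ENNReal.ofReal_mul (by positivity), ← ENNReal.ofReal_one]
    congr 1
    field_simp
  rw [← one_mul (∫⁻ r in Ioi (0 : ℝ), _), ← hc, mul_assoc, key2, mul_one]

/-! ### Local Lipschitz constants of radial functions -/

/-- A radial function has local Lipschitz constant at most the slope of its profile, because
`|‖y - x₀‖ - ‖x - x₀‖| ≤ ‖y - x‖`. The absolute value covers the sign of the real `limsup`. -/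
lemma abs_locLip_radial_le {E : Type*} [NormedAddCommGroup E] [NormedSpace ℝ E] [Nontrivial E]
    (x₀ x : E) {φ : ℝ → ℝ} {d : ℝ} (hφ : HasDerivAt φ d ‖x - x₀‖) :
    |locLip (fun y => φ ‖y - x₀‖) x| ≤ |d| := by
  have : (𝓝[≠] x).NeBot := Module.punctured_nhds_neBot ℝ E x
  have hub : ∀ ε > 0, ∀ᶠ y in 𝓝[≠] x,
      |φ ‖y - x₀‖ - φ ‖x - x₀‖| / dist x y ≤ |d| + ε := by
    intro ε hε
    have h1 := hφ.isLittleO.def hε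
    have hc : Tendsto (fun y => ‖y - x₀‖) (𝓝[≠] x) (𝓝 ‖x - x₀‖) :=
      (by fun_prop : Continuous fun y : E => ‖y - x₀‖).continuousAt.tendsto.mono_left
        nhdsWithin_le_nhds
    filter_upwards [hc.eventually h1] with y hy
    have h2 : |‖y - x₀‖ - ‖x - x₀‖| ≤ dist x y := by
      have := abs_norm_sub_norm_le (y - x₀) (x - x₀)
      rwa [sub_sub_sub_cancel_right, ← dist_eq_norm y x, dist_comm] at this
    refine div_le_of_le_mul₀ dist_nonneg (by positivity) ?_
    simp only [smul_eq_mul, Real.norm_eq_abs] at hy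
    have h3 : |φ ‖y - x₀‖ - φ ‖x - x₀‖| ≤
        (|d| + ε) * |‖y - x₀‖ - ‖x - x₀‖| := by
      have h4 := abs_sub_abs_le_abs_sub (φ ‖y - x₀‖ - φ ‖x - x₀‖) ((‖y - x₀‖ - ‖x - x₀‖) * d)
      rw [abs_mul] at h4
      nlinarith
    exact h3.trans (mul_le_mul_of_nonneg_left h2 (by positivity))
  have hnn : ∀ y, 0 ≤ |φ ‖y - x₀‖ - φ ‖x - x₀‖| / dist x y := fun y => by positivity
  have hcob : IsCoboundedUnder (· ≤ ·) (𝓝[≠] x)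
      (fun y => |φ ‖y - x₀‖ - φ ‖x - x₀‖| / dist x y) :=
    IsBoundedUnder.isCoboundedUnder_le ⟨0, by simpa using Eventually.of_forall hnn⟩
  have hbd : IsBoundedUnder (· ≤ ·) (𝓝[≠] x)
      (fun y => |φ ‖y - x₀‖ - φ ‖x - x₀‖| / dist x y) :=
    ⟨|d| + 1, by simpa using hub 1 one_pos⟩
  rw [locLip, abs_of_nonneg (le_limsup_of_frequently_le (Eventually.of_forall hnn).frequently hbd)]
  exact le_of_forall_pos_le_add fun ε hε => limsup_le_of_le hcob (hub ε hε)

/-! ### The extremal profile and its truncations -/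

/-- The radial profile `r ↦ (1 + r ^ q) ^ (-m)` of the extremal functions, where `q = 2 - a p`
and `m = (n - 2) / (2 - a p)`. -/
noncomputable def profile (q m r : ℝ) : ℝ := (1 + r ^ q) ^ (-m)

/-- The absolute value of the derivative of `profile q m` at `r > 0`. -/
noncomputable def slope (q m r : ℝ) : ℝ := q * m * r ^ (q - 1) * (1 + r ^ q) ^ (-m - 1)

/-- The profile frozen outside `[R⁻¹, R]` and lowered to vanish beyond `R`. The freezing near `0`
matters when `q < 1`, where `profile q m` is not Lipschitz at `0`. -/
noncomputable def truncProfile (q m R r : ℝ) : ℝ :=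
  profile q m (min R (max R⁻¹ r)) - profile q m R

lemma hasDerivAt_profile {q m r : ℝ} (hr : 0 < r) :
    HasDerivAt (profile q m) (-slope q m r) r := by
  have hrq := Real.rpow_pos_of_pos hr q
  have h1 : HasDerivAt (fun r : ℝ => 1 + r ^ q) (q * r ^ (q - 1)) r :=
    (Real.hasDerivAt_rpow_const (Or.inl hr.ne')).const_add 1
  convert! h1.rpow_const (p := -m) (Or.inl (by positivity)) using 1
  simp only [slope]; ring

lemma measurable_profile (q m : ℝ) : Measurable (profile q m) := by
  unfold profile; fun_prop

lemma measurable_slope (q m : ℝ) : Measurable (slope q m) := by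
  unfold slope; fun_prop

lemma measurable_truncProfile (q m R : ℝ) : Measurable (truncProfile q m R) :=
  ((measurable_profile q m).comp (by fun_prop)).sub_const _

lemma profile_strictAnti {q m r t : ℝ} (hq : 0 < q) (hm : 0 < m) (hr : 0 < r) (hrt : r < t) :
    profile q m t < profile q m r := by
  have h1 := Real.rpow_lt_rpow hr.le hrt hq
  have h2 := Real.rpow_pos_of_pos hr q
  exact Real.rpow_lt_rpow_of_neg (by positivity) (by linarith) (by linarith)

lemma tendsto_profile_atTop {q m : ℝ} (hq : 0 < q) (hm : 0 < m) :
    Tendsto (profile q m) atTop (𝓝 0) :=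
  (tendsto_rpow_neg_atTop hm).comp (tendsto_atTop_add_const_left _ 1 (tendsto_rpow_atTop hq))

lemma truncProfile_eq_zero {q m R r : ℝ} (h : R ≤ r) : truncProfile q m R r = 0 := by
  simp [truncProfile, h]

lemma truncProfile_of_mem {q m R r : ℝ} (h1 : R⁻¹ ≤ r) (h2 : r ≤ R) :
    truncProfile q m R r = profile q m r - profile q m R := by
  simp [truncProfile, h1, h2]

lemma truncProfile_zero_pos {q m R : ℝ} (hq : 0 < q) (hm : 0 < m) (hR : 1 < R) :
    0 < truncProfile q m R 0 := by
  have h0 : 0 < R⁻¹ := by positivity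
  have h1 : R⁻¹ < R := (inv_lt_one_of_one_lt₀ hR).trans hR
  rw [truncProfile, max_eq_left h0.le, min_eq_right h1.le, sub_pos]
  exact profile_strictAnti hq hm h0 h1

/-- Truncation does not increase the slope. -/
lemma exists_hasDerivAt_truncProfile {q m R r : ℝ} (hR : 1 < R)
    (hr : 0 < r) (h1 : r ≠ R⁻¹) (h2 : r ≠ R) :
    ∃ d, HasDerivAt (truncProfile q m R) d r ∧ |d| ≤ |slope q m r| := by
  have hRR : R⁻¹ < R := (inv_lt_one_of_one_lt₀ hR).trans hR
  rcases lt_or_gt_of_ne h1 with h1 | h1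
  · refine ⟨0, ?_, by simp⟩
    refine (hasDerivAt_const r (profile q m R⁻¹ - profile q m R)).congr_of_eventuallyEq ?_
    filter_upwards [Iio_mem_nhds h1] with t ht
    rw [truncProfile, max_eq_left ht.out.le, min_eq_right hRR.le]
  · rcases lt_or_gt_of_ne h2 with h2 | h2
    · refine ⟨-slope q m r, ?_, by simp⟩
      refine ((hasDerivAt_profile hr).sub_const (profile q m R)).congr_of_eventuallyEq ?_
      filter_upwards [Ioo_mem_nhds h1 h2] with t ht
      exact truncProfile_of_mem ht.1.le ht.2.le
    · refine ⟨0, ?_, by simp⟩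
      refine (hasDerivAt_const r (0 : ℝ)).congr_of_eventuallyEq ?_
      filter_upwards [Ioi_mem_nhds h2] with t ht
      exact truncProfile_eq_zero ht.out.le

lemma lipschitz_truncProfile {q m R : ℝ} (hR : 1 < R) :
    ∃ K : ℝ≥0, LipschitzWith K (truncProfile q m R) := by
  have hRR : R⁻¹ < R := (inv_lt_one_of_one_lt₀ hR).trans hR
  have hR0 : 0 < R⁻¹ := by positivity
  have hpos : ∀ r ∈ Icc R⁻¹ R, 0 < r := fun r hr => hR0.trans_le hr.1
  have hcont : ContinuousOn (slope q m) (Icc R⁻¹ R) := by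
    intro r hr
    have h0 := hpos r hr
    have h1 := Real.rpow_pos_of_pos h0 q
    have c1 : ∀ t : ℝ, ContinuousAt (fun r : ℝ => r ^ t) r := fun t =>
      Real.continuousAt_rpow_const _ _ (Or.inl h0.ne')
    have h2 : 1 + r ^ q ≠ 0 := by positivity
    have c2 : ContinuousAt (fun r : ℝ => (1 + r ^ q) ^ (-m - 1)) r :=
      (continuousAt_const.add (c1 q)).rpow_const (Or.inl h2)
    exact ((continuousAt_const.mul (c1 _)).mul c2).continuousWithinAt
  obtain ⟨M, hM⟩ := isCompact_Icc.exists_bound_of_continuousOn hcont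
  have hlip : LipschitzOnWith M.toNNReal (profile q m) (Icc R⁻¹ R) := by
    refine (convex_Icc _ _).lipschitzOnWith_of_nnnorm_hasDerivWithin_le
      (fun r hr => (hasDerivAt_profile (hpos r hr)).hasDerivWithinAt) fun r hr => ?_
    rw [nnnorm_neg]
    exact NNReal.le_toNNReal_of_coe_le (hM r hr)
  have hclamp : LipschitzWith 1 (fun r : ℝ => min R (max R⁻¹ r)) :=
    (LipschitzWith.id.const_max R⁻¹).const_min R
  refine ⟨M.toNNReal, LipschitzWith.of_dist_le_mul fun x y => ?_⟩
  have hmem : ∀ r : ℝ, min R (max R⁻¹ r) ∈ Icc R⁻¹ R := fun r =>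
    ⟨le_min hRR.le (le_max_left _ _), min_le_left _ _⟩
  rw [truncProfile, truncProfile, dist_sub_right]
  refine (hlip.dist_le_mul _ (hmem x) _ (hmem y)).trans ?_
  gcongr
  simpa using hclamp.dist_le_mul x y

/-- The weighted `L^p` radial integral of the extremal profile, for `p = 2 (m + 1) / m`. -/
lemma lintegral_profile {q m p s : ℝ} {n : ℕ} (hn : 1 ≤ n) (hq : 0 < q) (hm : 0 < m)
    (hnq : (n : ℝ) = q * m + 2) (hs : s = 2 - q) (hp : p = 2 * (m + 1) / m) :
    ∫⁻ r in Ioi (0 : ℝ), ENNReal.ofReal (r ^ (n - 1)) *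
      ENNReal.ofReal (|profile q m r| ^ p / r ^ s) =
      ENNReal.ofReal (ProbabilityTheory.beta (m + 1) (m + 1) / q) := by
  rw [← lintegral_beta_Ioi hq (by linarith : 0 < m + 1) (by linarith : 0 < m + 1)]
  refine setLIntegral_congr_fun measurableSet_Ioi fun r (hr : 0 < r) => ?_
  have hrq := Real.rpow_pos_of_pos hr q
  have h1 : 0 < 1 + r ^ q := by positivity
  rw [← ENNReal.ofReal_mul (by positivity)]
  congr 1
  rw [profile, abs_of_pos (Real.rpow_pos_of_pos h1 _), ← Real.rpow_mul h1.le, div_eq_mul_inv,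
    ← Real.rpow_neg hr.le, ← Real.rpow_natCast, Nat.cast_sub hn, mul_left_comm, mul_comm,
    ← Real.rpow_add hr]
  congr 2
  · rw [hnq, hs]; push_cast; ring
  · rw [hp]; field_simp; ring

/-- The radial Dirichlet integral of the extremal profile. -/
lemma lintegral_slope {q m : ℝ} {n : ℕ} (hn : 1 ≤ n) (hq : 0 < q) (hm : 0 < m)
    (hnq : (n : ℝ) = q * m + 2) :
    ∫⁻ r in Ioi (0 : ℝ), ENNReal.ofReal (r ^ (n - 1)) * ENNReal.ofReal (slope q m r ^ 2) =
      ENNReal.ofReal ((q * m) ^ 2 * (ProbabilityTheory.beta (m + 2) m / q)) := by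
  rw [ENNReal.ofReal_mul (by positivity),
    ← lintegral_beta_Ioi hq (by linarith : 0 < m + 2) hm,
    ← lintegral_const_mul' _ _ ENNReal.ofReal_ne_top]
  refine setLIntegral_congr_fun measurableSet_Ioi fun r (hr : 0 < r) => ?_
  have hrq := Real.rpow_pos_of_pos hr q
  have h1 : 0 < 1 + r ^ q := by positivity
  rw [← ENNReal.ofReal_mul (by positivity), ← ENNReal.ofReal_mul (by positivity)]
  congr 1
  have e1 : r ^ (q * (m + 2) - 1) = r ^ (n - 1) * (r ^ (q - 1)) ^ 2 := by
    rw [← Real.rpow_natCast, ← Real.rpow_natCast, ← Real.rpow_mul hr.le, ← Real.rpow_add hr,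
      Nat.cast_sub hn, hnq]
    congr 1; push_cast; ring
  have e2 : (1 + r ^ q) ^ (-(m + 2 + m)) = ((1 + r ^ q) ^ (-m - 1)) ^ 2 := by
    rw [← Real.rpow_natCast, ← Real.rpow_mul h1.le]
    congr 1; push_cast; ring
  rw [e1, e2, slope]; ring

lemma beta_shift {m : ℝ} (hm : 0 < m) :
    ProbabilityTheory.beta (m + 2) m =
      (m + 1) / m * ProbabilityTheory.beta (m + 1) (m + 1) := by
  have h1 : Real.Gamma (m + 2) = (m + 1) * Real.Gamma (m + 1) := by
    rw [← Real.Gamma_add_one (by positivity)]; congr 1; ring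
  have h2 : Real.Gamma (m + 1) = m * Real.Gamma m := Real.Gamma_add_one hm.ne'
  rw [ProbabilityTheory.beta, ProbabilityTheory.beta, h1,
    (by ring : m + 2 + m = m + 1 + (m + 1)), h2]
  field_simp

lemma omegaBall_pos (n : ℕ) : 0 < omegaBall n :=
  div_pos (Real.rpow_pos_of_pos Real.pi_pos _) (Real.Gamma_pos_of_pos (by positivity))

/-- The value of `CKNconst` is the quotient of the two norms of the extremal function. -/
lemma CKNconst_mul_eq {q m a p : ℝ} {n : ℕ} (hn : 1 ≤ n) (hq : 0 < q) (hm : 0 < m)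
    (hnq : (n : ℝ) = q * m + 2) (hs : a * p = 2 - q) (hp : p = 2 * (m + 1) / m) :
    CKNconst n a p * (n * omegaBall n * ((q * m) ^ 2 *
        (ProbabilityTheory.beta (m + 2) m / q))) ^ ((1 : ℝ) / 2) =
      (n * omegaBall n * (ProbabilityTheory.beta (m + 1) (m + 1) / q)) ^ ((1 : ℝ) / p) := by
  have hn0 : (0 : ℝ) < n := by exact_mod_cast hn
  have hω := omegaBall_pos n
  have hB := ProbabilityTheory.beta_pos (by linarith : 0 < m + 1) (by linarith : 0 < m + 1)
  set T : ℝ := n * omegaBall n * (ProbabilityTheory.beta (m + 1) (m + 1) / q) with hT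
  have hT0 : 0 < T := by positivity
  set L : ℝ := (q * m) * (q * (m + 1)) with hL
  have hL0 : 0 < L := by positivity
  have e1 : n * omegaBall n * ((q * m) ^ 2 * (ProbabilityTheory.beta (m + 2) m / q)) = L * T := by
    rw [beta_shift hm, hL, hT]; field_simp
  have hG1 : Real.Gamma (m + 1) ≠ 0 := (Real.Gamma_pos_of_pos (by linarith)).ne'
  have hG2 : Real.Gamma (m + 1 + (m + 1)) ≠ 0 := (Real.Gamma_pos_of_pos (by linarith)).ne'
  have e2 : CKNconst n a p = L⁻¹ ^ ((1 : ℝ) / 2) * T⁻¹ ^ (1 / (2 * (m + 1))) := by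
    have a1 : (2 * (n : ℝ) - 2 * a * p) / (2 - a * p) = m + 1 + (m + 1) := by
      rw [mul_assoc 2 a p, hs, hnq, sub_sub_cancel]; field_simp; ring
    have a2 : ((n : ℝ) - a * p) / (2 - a * p) = m + 1 := by
      rw [hs, hnq, sub_sub_cancel]; field_simp; ring
    have a3 : (2 - a * p) / (2 * (n : ℝ) - 2 * a * p) = 1 / (2 * (m + 1)) := by
      rw [← inv_div, a1, one_div]; congr 1; ring
    have a4 : ((n : ℝ) - 2) * ((n : ℝ) - a * p) = L := by rw [hs, hnq, hL]; ring
    rw [CKNconst, a1, a2, a3, a4, one_div L, hs, hT, ProbabilityTheory.beta]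
    congr 2
    field_simp
    ring
  rw [e1, e2, Real.mul_rpow hL0.le hT0.le, Real.inv_rpow hL0.le, Real.inv_rpow hT0.le,
    ← Real.rpow_neg hT0.le]
  have e3 : (1 : ℝ) / p = -(1 / (2 * (m + 1))) + 1 / 2 := by rw [hp]; field_simp; ring
  rw [e3, Real.rpow_add hT0]
  have := (Real.rpow_pos_of_pos hL0 (1 / 2)).ne'
  field_simp

/-! ### The truncated extremals as test functions -/

/-- The Dirichlet energy of every truncated extremal is bounded by that of the extremal. -/
lemma lintegral_locLip_le {E : Type*} [NormedAddCommGroup E] [NormedSpace ℝ E]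
    [MeasurableSpace E] [BorelSpace E] [FiniteDimensional ℝ E] [Nontrivial E]
    (μ : Measure E) [μ.IsAddHaarMeasure] (x₀ : E) {q m R : ℝ} (hR : 1 < R) :
    ∫⁻ x, ENNReal.ofReal (locLip (fun y => truncProfile q m R ‖y - x₀‖) x ^ 2) ∂μ ≤
      ∫⁻ x, ENNReal.ofReal (slope q m ‖x - x₀‖ ^ 2) ∂μ := by
  have hsph : ∀ r : ℝ, ∀ᵐ x ∂μ, ‖x - x₀‖ ≠ r := by
    intro r
    have h0 : μ (sphere x₀ r) = 0 := Measure.addHaar_sphere μ x₀ r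
    filter_upwards [measure_eq_zero_iff_ae_notMem.1 h0] with x hx
    simpa [mem_sphere, dist_eq_norm] using hx
  refine lintegral_mono_ae ?_
  filter_upwards [hsph 0, hsph R⁻¹, hsph R] with x h0 h1 h2
  obtain ⟨d, hd, hds⟩ := exists_hasDerivAt_truncProfile (q := q) (m := m) hR
    (lt_of_le_of_ne (norm_nonneg _) h0.symm) h1 h2
  exact ENNReal.ofReal_le_ofReal (sq_le_sq.2 ((abs_locLip_radial_le x₀ x hd).trans hds))

/-- Fatou's lemma along the truncations at `R = k + 2`. -/
lemma lintegral_profile_le_liminf {E : Type*} [NormedAddCommGroup E] [NormedSpace ℝ E]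
    [MeasurableSpace E] [BorelSpace E] [FiniteDimensional ℝ E] [Nontrivial E]
    (μ : Measure E) [μ.IsAddHaarMeasure] (x₀ : E) {q m p s : ℝ} (hq : 0 < q) (hm : 0 < m)
    (hp : 0 < p) :
    ∫⁻ x, ENNReal.ofReal (|profile q m ‖x - x₀‖| ^ p / ‖x - x₀‖ ^ s) ∂μ ≤
      liminf (fun k : ℕ => ∫⁻ x, ENNReal.ofReal
        (|truncProfile q m (k + 2) ‖x - x₀‖| ^ p / ‖x - x₀‖ ^ s) ∂μ) atTop := by
  have hmeas : ∀ k : ℕ, Measurable fun x : E => ENNReal.ofReal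
      (|truncProfile q m (k + 2) ‖x - x₀‖| ^ p / ‖x - x₀‖ ^ s) := by
    intro k
    have h1 : Measurable fun x : E => truncProfile q m (k + 2) ‖x - x₀‖ :=
      (measurable_truncProfile q m _).comp (by fun_prop)
    have h2 : Measurable fun x : E => ‖x - x₀‖ := by fun_prop
    have h3 : Measurable fun x : E => |truncProfile q m (k + 2) ‖x - x₀‖| := by
      simpa only [Real.norm_eq_abs] using h1.norm
    exact ((h3.pow_const p).div (h2.pow_const s)).ennreal_ofReal
  refine le_trans (lintegral_mono_ae ?_) (lintegral_liminf_le hmeas)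
  have h0 : ∀ᵐ x ∂μ, x ≠ x₀ := measure_eq_zero_iff_ae_notMem.1 (measure_singleton x₀)
  filter_upwards [h0] with x hx
  refine le_of_eq (Tendsto.liminf_eq ?_).symm
  have hr : 0 < ‖x - x₀‖ := norm_pos_iff.2 (sub_ne_zero.2 hx)
  set r := ‖x - x₀‖
  have hk : Tendsto (fun k : ℕ => (k : ℝ) + 2) atTop atTop :=
    tendsto_atTop_add_const_right _ 2 tendsto_natCast_atTop_atTop
  have hlim : Tendsto (fun k : ℕ => truncProfile q m (k + 2) r) atTop (𝓝 (profile q m r)) := by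
    have h1 : Tendsto (fun k : ℕ => profile q m r - profile q m (k + 2)) atTop
        (𝓝 (profile q m r - 0)) :=
      tendsto_const_nhds.sub ((tendsto_profile_atTop hq hm).comp hk)
    rw [sub_zero] at h1
    refine h1.congr' ?_
    filter_upwards [hk.eventually_ge_atTop r, hk.eventually_ge_atTop r⁻¹] with k h2 h3
    exact (truncProfile_of_mem (inv_le_of_inv_le₀ hr h3) h2).symm
  exact (ENNReal.continuous_ofReal.tendsto _).comp
    ((hlim.abs.rpow_const (Or.inr hp.le)).div_const _)

end CKNSharp

open CKNSharp

/-- the constant `K_a` is optimal in the Caffarelli-Kohn-Nirenberg inequality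
on a Minkowski space: for every `C < K_a` some nonzero compactly supported Lipschitz
function violates the inequality with constant `C`. -/
theorem ckn_minkowski_sharp {E : Type*} [NormedAddCommGroup E] [NormedSpace ℝ E]
    [MeasurableSpace E] [BorelSpace E] [FiniteDimensional ℝ E]
    (n : ℕ) (hn : 3 ≤ n) (hdim : Module.finrank ℝ E = n)
    (a p : ℝ) (ha0 : 0 ≤ a) (ha1 : a < 1) (hp : p = 2 * n / (n - 2 + 2 * a))
    (μ : Measure E) [μ.IsAddHaarMeasure]
    (hμ : μ (ball (0 : E) 1) = ENNReal.ofReal (omegaBall n))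
    (x₀ : E) :
    ∀ C : ℝ, C < CKNconst n a p →
      ∃ u : E → ℝ, (∃ K : NNReal, LipschitzWith K u) ∧ HasCompactSupport u ∧ u ≠ 0 ∧
        ENNReal.ofReal C * (∫⁻ x, ENNReal.ofReal (locLip u x ^ 2) ∂μ) ^ ((1 : ℝ) / 2) <
          (∫⁻ x, ENNReal.ofReal (|u x| ^ p / ‖x - x₀‖ ^ (a * p)) ∂μ) ^ ((1 : ℝ) / p) := by
  intro C hC
  have hn3 : (3 : ℝ) ≤ n := by exact_mod_cast hn
  have : Nontrivial E := Module.nontrivial_of_finrank_pos (R := ℝ) (by omega)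
  have hden : 0 < (n : ℝ) - 2 + 2 * a := by linarith
  have hp0 : 0 < p := by rw [hp]; positivity
  obtain ⟨q, hqdef⟩ : ∃ q, q = 2 - a * p := ⟨_, rfl⟩
  have hs : a * p = 2 - q := by linarith
  have hq : 0 < q := by
    have : q = 2 * (1 - a) * (n - 2) / (n - 2 + 2 * a) := by
      rw [hqdef, hp]; field_simp; ring
    rw [this]
    exact div_pos (mul_pos (by linarith) (by linarith)) hden
  obtain ⟨m, hmdef⟩ : ∃ m, m = ((n : ℝ) - 2) / q := ⟨_, rfl⟩
  have hm : 0 < m := by rw [hmdef]; exact div_pos (by linarith) hq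
  have hnq : (n : ℝ) = q * m + 2 := by rw [hmdef]; field_simp; ring
  have hpm : p = 2 * (m + 1) / m := by
    have h1 : p * (n - 2 + 2 * a) = 2 * n := by rw [hp]; field_simp
    have h2 : p * (q * m) = 2 * (q * m + q) := by
      have h3 : (n : ℝ) - 2 = q * m := by linarith
      rw [h3] at h1
      linarith
    rw [eq_div_iff hm.ne']
    have h4 : q * (p * m) = q * (2 * (m + 1)) := by linarith
    exact mul_left_cancel₀ hq.ne' h4
  have hn1 : 1 ≤ n := by omega
  have hω := omegaBall_pos n
  have hvol : (Module.finrank ℝ E : ENNReal) * μ (ball 0 1) =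
      ENNReal.ofReal (n * omegaBall n) := by
    rw [hdim, hμ, ENNReal.ofReal_mul (by positivity), ENNReal.ofReal_natCast]
  -- The two integrals of the (untruncated) extremal function.
  have hD : ∫⁻ x, ENNReal.ofReal (slope q m ‖x - x₀‖ ^ 2) ∂μ =
      ENNReal.ofReal (n * omegaBall n *
        ((q * m) ^ 2 * (ProbabilityTheory.beta (m + 2) m / q))) := by
    rw [lintegral_radial μ x₀ (f := fun r => ENNReal.ofReal (slope q m r ^ 2))
      ((measurable_slope q m).pow_const 2).ennreal_ofReal, hvol, hdim,
      lintegral_slope hn1 hq hm hnq, ← ENNReal.ofReal_mul (by positivity)]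
  have hI : ∫⁻ x, ENNReal.ofReal (|profile q m ‖x - x₀‖| ^ p / ‖x - x₀‖ ^ (a * p)) ∂μ =
      ENNReal.ofReal (n * omegaBall n * (ProbabilityTheory.beta (m + 1) (m + 1) / q)) := by
    have hmeas : Measurable fun r : ℝ => ENNReal.ofReal (|profile q m r| ^ p / r ^ (a * p)) := by
      have h3 : Measurable fun r : ℝ => |profile q m r| := by
        simpa only [Real.norm_eq_abs] using (measurable_profile q m).norm
      exact ((h3.pow_const p).div (measurable_id.pow_const _)).ennreal_ofReal
    rw [lintegral_radial μ x₀ hmeas, hvol, hdim, lintegral_profile hn1 hq hm hnq hs hpm,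
      ← ENNReal.ofReal_mul (by positivity)]
  set D : ℝ := n * omegaBall n * ((q * m) ^ 2 * (ProbabilityTheory.beta (m + 2) m / q)) with hDdef
  have hD0 : 0 < D := by
    have := ProbabilityTheory.beta_pos (by linarith : 0 < m + 2) hm
    positivity
  have hK := CKNconst_mul_eq hn1 hq hm hnq hs hpm
  rw [← hDdef] at hK
  set T : ℝ := n * omegaBall n * (ProbabilityTheory.beta (m + 1) (m + 1) / q) with hTdef
  have hT0 : 0 < T := by
    have := ProbabilityTheory.beta_pos (by linarith : 0 < m + 1) (by linarith : 0 < m + 1)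
    positivity
  -- The extremal function itself violates the inequality with constant `C`.
  have hstrict : ENNReal.ofReal C * ENNReal.ofReal D ^ ((1 : ℝ) / 2) <
      ENNReal.ofReal T ^ ((1 : ℝ) / p) := by
    rw [ENNReal.ofReal_rpow_of_pos hD0, ENNReal.ofReal_rpow_of_pos hT0, ← hK,
      ← ENNReal.ofReal_mul' (by positivity)]
    have hDp : 0 < D ^ ((1 : ℝ) / 2) := by positivity
    refine (ENNReal.ofReal_lt_ofReal_iff ?_).2 (mul_lt_mul_of_pos_right hC hDp)
    rw [hK]; positivity
  by_contra hcon
  push Not at hcon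
  have hbound : ∀ k : ℕ, ∫⁻ x, ENNReal.ofReal
      (|truncProfile q m (k + 2) ‖x - x₀‖| ^ p / ‖x - x₀‖ ^ (a * p)) ∂μ ≤
      (ENNReal.ofReal C * ENNReal.ofReal D ^ ((1 : ℝ) / 2)) ^ p := by
    intro k
    have hR : (1 : ℝ) < k + 2 := by have := Nat.cast_nonneg (α := ℝ) k; linarith
    obtain ⟨K, hKlip⟩ := lipschitz_truncProfile (q := q) (m := m) hR
    have hnorm : LipschitzWith 1 fun x : E => ‖x - x₀‖ :=
      LipschitzWith.of_dist_le_mul fun x y => by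
        simpa [dist_eq_norm] using abs_norm_sub_norm_le (x - x₀) (y - x₀)
    have h := hcon (fun x => truncProfile q m (k + 2) ‖x - x₀‖)
      ⟨K * 1, hKlip.comp hnorm⟩
      (HasCompactSupport.intro (isCompact_closedBall x₀ (k + 2)) fun x hx => by
        refine truncProfile_eq_zero ?_
        simp only [mem_closedBall, dist_eq_norm, not_le] at hx
        exact hx.le)
      (fun h0 => by
        have h1 := congrFun h0 x₀
        have h2 := truncProfile_zero_pos hq hm hR
        simp only [sub_self, norm_zero, Pi.zero_apply] at h1
        exact h2.ne' h1)
    have h2 := lintegral_locLip_le μ x₀ (q := q) (m := m) hR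
    rw [hD] at h2
    rw [one_div p, ENNReal.rpow_inv_le_iff hp0] at h
    refine h.trans ?_
    gcongr
  have hfatou := lintegral_profile_le_liminf μ x₀ (s := a * p) hq hm hp0
  rw [hI] at hfatou
  have hle : ENNReal.ofReal T ≤ (ENNReal.ofReal C * ENNReal.ofReal D ^ ((1 : ℝ) / 2)) ^ p :=
    hfatou.trans ((liminf_le_liminf (Eventually.of_forall hbound)).trans (by simp))
  refine hstrict.not_ge ?_
  rwa [one_div p, ENNReal.rpow_inv_le_iff hp0]
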